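/- Let q : ℤ → (ℝ² → ℝ) be C² functions satisfying the two-dimensional Toda lattice q_{xy}(j) = h(j) − h(j−1), where h(j) := exp(q(j+1) − q(j)) and b(j) := q_x(j), and let B¹ : ℤ → (ℝ² → ℝ) be C¹ functions satisfying ∂_y B¹(j) = ∂_x h(j) for all j. Then the density of the first integral I₂ is a telescoping y-derivative: for all j ∈ ℤ, ∂_y( b(j)² + 2 B¹(j) ) = G(j) − G(j−1), where G(j) := 2 h(j) b(j+1). Consequently the formal sum I₂ = Σ_j (b(j)² + 2 b^{(1)}(j)) is a y-integral of the Toda lattice. -/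

import Mathlib

/-- Partial derivative in the first (x) variable. -/
noncomputable def pdx (f : ℝ × ℝ → ℝ) : ℝ × ℝ → ℝ :=
  fun p => deriv (fun t => f (t, p.2)) p.1

/-- Partial derivative in the second (y) variable. -/
noncomputable def pdy (f : ℝ × ℝ → ℝ) : ℝ × ℝ → ℝ :=
  fun p => deriv (fun t => f (p.1, t)) p.2

/-!
The lattice equation gives `∂_y b(j)² = 2 b(j) (h(j) - h(j-1))`, while differentiating the
exponential in `x` gives `∂_x h(j) = h(j) (b(j+1) - b(j))`, so `∂_y (2 B¹(j)) = 2 ∂_x h(j)` cancels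
the term `2 b(j) h(j)` and leaves `2 h(j) b(j+1) - 2 h(j-1) b(j)`.
-/

section Slices

variable {𝕜 E F G : Type*} [NontriviallyNormedField 𝕜]
  [NormedAddCommGroup E] [NormedSpace 𝕜 E] [NormedAddCommGroup F] [NormedSpace 𝕜 F]
  [NormedAddCommGroup G] [NormedSpace 𝕜 G] {f : E × F → G} {p : E × F}

theorem differentiableAt_slice_fst (hf : DifferentiableAt 𝕜 f p) :
    DifferentiableAt 𝕜 (fun x => f (x, p.2)) p.1 :=
  hf.comp p.1 (hasFDerivAt_prodMk_left p.1 p.2).differentiableAt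

theorem differentiableAt_slice_snd (hf : DifferentiableAt 𝕜 f p) :
    DifferentiableAt 𝕜 (fun y => f (p.1, y)) p.2 :=
  hf.comp p.2 (hasFDerivAt_prodMk_right p.1 p.2).differentiableAt

end Slices

section PartialDerivatives

variable {f u v : ℝ × ℝ → ℝ} {p : ℝ × ℝ}

theorem pdx_eq_fderiv_apply (hf : DifferentiableAt ℝ f p) : pdx f p = fderiv ℝ f p (1, 0) :=
  (hf.hasFDerivAt.comp_hasDerivAt p.1
    ((hasDerivAt_id p.1).prodMk (hasDerivAt_const p.1 p.2))).deriv

theorem contDiff_pdx {m n : WithTop ℕ∞} (hf : ContDiff ℝ n f) (hmn : m + 1 ≤ n) :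
    ContDiff ℝ m (pdx f) := by
  have hn : n ≠ 0 := by
    rintro rfl
    simp at hmn
  have hpdx : pdx f = fun p => fderiv ℝ f p (1, 0) :=
    funext fun p => pdx_eq_fderiv_apply (hf.differentiable hn p)
  rw [hpdx]
  exact (hf.fderiv_right hmn).clm_apply contDiff_const

theorem pdx_exp_sub (hu : DifferentiableAt ℝ (fun t => u (t, p.2)) p.1)
    (hv : DifferentiableAt ℝ (fun t => v (t, p.2)) p.1) :
    pdx (fun s => Real.exp (u s - v s)) p = Real.exp (u p - v p) * (pdx u p - pdx v p) :=
  (hu.hasDerivAt.sub hv.hasDerivAt).exp.deriv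

theorem pdy_sq_add_two_mul (hu : DifferentiableAt ℝ (fun t => u (p.1, t)) p.2)
    (hv : DifferentiableAt ℝ (fun t => v (p.1, t)) p.2) :
    pdy (fun s => u s ^ 2 + 2 * v s) p = 2 * u p * pdy u p + 2 * pdy v p := by
  simpa [pdy] using ((hu.hasDerivAt.fun_pow 2).fun_add (hv.hasDerivAt.const_mul 2)).deriv

end PartialDerivatives

theorem toda_first_integral_I2_telescopes_general
    {q h b B1 G : ℤ → ℝ × ℝ → ℝ} {p : ℝ × ℝ}
    (hq : ∀ j, DifferentiableAt ℝ (fun t => q j (t, p.2)) p.1)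
    (hh : ∀ j s, h j s = Real.exp (q (j + 1) s - q j s))
    (hb : ∀ j, b j = pdx (q j))
    (hby : ∀ j, DifferentiableAt ℝ (fun t => b j (p.1, t)) p.2)
    (toda : ∀ j, pdy (b j) p = h j p - h (j - 1) p)
    (hB1 : ∀ j, DifferentiableAt ℝ (fun t => B1 j (p.1, t)) p.2)
    (e2 : ∀ j, pdy (B1 j) p = pdx (h j) p)
    (hG : ∀ j, G j p = 2 * h j p * b (j + 1) p) (j : ℤ) :
    pdy (fun s => b j s ^ 2 + 2 * B1 j s) p = G j p - G (j - 1) p := by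
  have pdx_h : pdx (h j) p = h j p * (b (j + 1) p - b j p) := by
    rw [funext (hh j), hb, hb, pdx_exp_sub (hq (j + 1)) (hq j)]
  calc pdy (fun s => b j s ^ 2 + 2 * B1 j s) p
      = 2 * b j p * pdy (b j) p + 2 * pdy (B1 j) p := pdy_sq_add_two_mul (hby j) (hB1 j)
    _ = 2 * b j p * (h j p - h (j - 1) p) + 2 * (h j p * (b (j + 1) p - b j p)) := by
      rw [toda, e2, pdx_h]
    _ = 2 * h j p * b (j + 1) p - 2 * h (j - 1) p * b j p := by ring
    _ = G j p - G (j - 1) p := by rw [hG, hG, sub_add_cancel]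

/-- the density of the first integral `I₂ = Σⱼ (b(j)² + 2b⁽¹⁾(j))` is a
telescoping y-derivative: `∂_y(b(j)² + 2B¹(j)) = G(j) − G(j−1)` with `G(j) = 2h(j)b(j+1)`.
Hence `I₂` is a y-integral of the 2D Toda lattice. -/
theorem toda_first_integral_I2_telescopes
    (q h b : ℤ → ℝ × ℝ → ℝ)
    (hq : ∀ j, ContDiff ℝ 2 (q j))
    (hh : ∀ j p, h j p = Real.exp (q (j + 1) p - q j p))
    (hb : ∀ j, b j = pdx (q j))
    (toda : ∀ (j : ℤ) (p : ℝ × ℝ), pdy (pdx (q j)) p = h j p - h (j - 1) p)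
    (B1 : ℤ → ℝ × ℝ → ℝ)
    (hB1 : ∀ j, ContDiff ℝ 1 (B1 j))
    (e2 : ∀ (j : ℤ) (p : ℝ × ℝ), pdy (B1 j) p = pdx (h j) p)
    (G : ℤ → ℝ × ℝ → ℝ)
    (hG : ∀ j p, G j p = 2 * h j p * b (j + 1) p) :
    ∀ (j : ℤ) (p : ℝ × ℝ),
      pdy (fun s => (b j s) ^ 2 + 2 * B1 j s) p = G j p - G (j - 1) p := by
  intro j p
  have hb_diff (i : ℤ) : Differentiable ℝ (b i) :=
    hb i ▸ (contDiff_pdx (hq i) one_add_one_eq_two.le).differentiable one_ne_zero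
  exact toda_first_integral_I2_telescopes_general
    (fun i => differentiableAt_slice_fst ((hq i).differentiable two_ne_zero p)) hh hb
    (fun i => differentiableAt_slice_snd (hb_diff i p)) (fun i => hb i ▸ toda i p)
    (fun i => differentiableAt_slice_snd ((hB1 i).differentiable one_ne_zero p))
    (fun i => e2 i p) (fun i => hG i p) j
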